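/- Let X and Y be selfadjoint elements of 𝔄 that are c-free with respect to (Φ, Ψ). Suppose that Φ(a*a) ≥ 0 and Ψ(a*a) ≥ 0 for every a in the *-subalgebra of 𝔄 generated by 𝔅 ∪ {X}, and likewise for every a in the *-subalgebra generated by 𝔅 ∪ {Y}. Then Φ(a*a) ≥ 0 and Ψ(a*a) ≥ 0 for every a in the *-subalgebra of 𝔄 generated by 𝔅 ∪ {X+Y}. -/

import Mathlib

/-!
STATEMENT 3: Let `X` and `Y` be selfadjoint elements of `𝔄` which are c-free with
respect to `(Φ, Ψ)` (i.e. the *-subalgebras generated by `𝔅 ∪ {X}` and `𝔅 ∪ {Y}` are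
c-free).  If `Φ(a*a) ≥ 0` and `Ψ(a*a) ≥ 0` for every `a` in the *-subalgebra generated
by `𝔅 ∪ {X}`, and likewise for `𝔅 ∪ {Y}`, then `Φ(a*a) ≥ 0` and `Ψ(a*a) ≥ 0` for every
`a` in the *-subalgebra generated by `𝔅 ∪ {X + Y}`.
-/

/-- The family `S` of *-subalgebras of `A` is conditionally free (c-free) with respect to
`(Φ, Ψ)`: for every `n ≥ 1`, every tuple `a₁, …, aₙ` with `aⱼ ∈ S (ε j)`,
`ε(1) ≠ ε(2) ≠ … ≠ ε(n)` (adjacent indices distinct) and `Ψ(aⱼ) = 0`, one has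
`Ψ(a₁⋯aₙ) = 0` and `Φ(a₁⋯aₙ) = Φ(a₁)⋯Φ(aₙ)`. -/
def IsCFreeFamily {B A I : Type*} [Ring B] [Algebra ℂ B] [Ring A] [Algebra ℂ A]
    [StarRing A] [StarModule ℂ A]
    (Φ Ψ : A →ₗ[ℂ] B) (S : I → StarSubalgebra ℂ A) : Prop :=
  ∀ (m : ℕ) (ε : Fin (m + 1) → I), (∀ i : Fin m, ε i.castSucc ≠ ε i.succ) →
    ∀ a : Fin (m + 1) → A, (∀ j, a j ∈ S (ε j)) → (∀ j, Ψ (a j) = 0) →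
      Ψ (List.ofFn a).prod = 0 ∧
      Φ (List.ofFn a).prod = (List.ofFn fun j => Φ (a j)).prod

theorem CStarAlgebra.exists_star_mul_self_eq_neg_conjugate {C : Type*} [CStarAlgebra C]
    {p : C} (hp : IsSelfAdjoint p) :
    ∃ r x : C, star r * r = -(star x * (p * x)) ∧ (r = 0 → ∃ q : C, p = star q * q) := by
  let _ : PartialOrder C := CStarAlgebra.spectralOrder C
  let _ : StarOrderedRing C := CStarAlgebra.spectralOrderedRing C
  have hN : 0 ≤ p⁻ := CFC.negPart_nonneg p
  have hNs : star p⁻ = p⁻ := hN.isSelfAdjoint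
  have hSs : star (CFC.sqrt p⁻) = CFC.sqrt p⁻ := (CFC.sqrt_nonneg p⁻).isSelfAdjoint
  refine ⟨CFC.sqrt p⁻ * p⁻, p⁻, ?_, fun h => ?_⟩
  · have h1 : p * p⁻ = -(p⁻ * p⁻) := by
      nth_rw 1 [← CFC.posPart_sub_negPart p hp]
      rw [sub_mul, CFC.posPart_mul_negPart, zero_sub]
    rw [h1, star_mul, hSs, hNs, mul_assoc, ← mul_assoc (CFC.sqrt _),
      CFC.sqrt_mul_sqrt_self _ hN, mul_neg, neg_neg]
  · have hN0 : p⁻ = 0 := by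
      rw [← CStarRing.star_mul_self_eq_zero_iff, hNs]
      nth_rw 1 [← CFC.sqrt_mul_sqrt_self _ hN]
      rw [mul_assoc, h, mul_zero]
    have hp0 : 0 ≤ p := (CFC.negPart_eq_zero_iff p hp).1 hN0
    refine ⟨CFC.sqrt p, ?_⟩
    rw [(CFC.sqrt_nonneg p).isSelfAdjoint.star_eq, CFC.sqrt_mul_sqrt_self p hp0]

theorem CStarMatrix.exists_eq_sum_star_mul {B C n : Type*} [CStarAlgebra B] [PartialOrder B]
    [StarOrderedRing B] [CStarAlgebra C] [Fintype n] (f : C →⋆ₐ[ℂ] B)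
    (hf : Function.Injective f) (p : n → n → C) (hp : ∀ i j, star (p i j) = p j i)
    (hpos : ∀ d : n → C, 0 ≤ f (∑ i, ∑ j, star (d i) * p i j * d j)) :
    ∃ q : n → n → C, ∀ i j, p i j = ∑ k, star (q k i) * q k j := by
  classical
  let _ : PartialOrder C := CStarAlgebra.spectralOrder C
  let _ : StarOrderedRing C := CStarAlgebra.spectralOrderedRing C
  have hP : IsSelfAdjoint (CStarMatrix.ofMatrix p : CStarMatrix n n C) := by
    ext i j
    exact hp j i
  obtain ⟨r, x, hrx, hq⟩ := CStarAlgebra.exists_star_mul_self_eq_neg_conjugate hP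
  obtain ⟨q, hq⟩ := hq <| by
    ext i k
    have hk : ∑ j, star (r j k) * r j k = -∑ i, ∑ j, star (x i k) * p i j * x j k := by
      have hk := congrFun (congrFun hrx k) k
      simp only [mul_assoc, ← Finset.mul_sum]
      exact hk
    have hnn : ∀ j ∈ Finset.univ, 0 ≤ star (f (r j k)) * f (r j k) :=
      fun j _ => star_mul_self_nonneg _
    have hle : ∑ j, star (f (r j k)) * f (r j k) ≤ 0 := by
      have h := neg_nonpos.2 (hpos fun j => x j k)
      rw [← map_neg, ← hk] at h
      simpa only [map_sum, map_mul, map_star] using h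
    have hz := (Finset.sum_eq_zero_iff_of_nonneg hnn).1
      (le_antisymm hle (Finset.sum_nonneg hnn)) i (Finset.mem_univ i)
    exact hf (((CStarRing.star_mul_self_eq_zero_iff _).1 hz).trans (map_zero f).symm)
  exact ⟨q, fun i j => congrFun (congrFun hq i) j⟩

theorem StarSubalgebra.exists_eq_sum_star_mul {B n : Type*} [CStarAlgebra B] [PartialOrder B]
    [StarOrderedRing B] [Fintype n] (D : StarSubalgebra ℂ B) (hD : IsClosed (D : Set B))
    (p : n → n → B) (hpD : ∀ i j, p i j ∈ D) (hp : ∀ i j, star (p i j) = p j i)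
    (hpos : ∀ d : n → B, (∀ i, d i ∈ D) → 0 ≤ ∑ i, ∑ j, star (d i) * p i j * d j) :
    ∃ q : n → n → B, (∀ i j, q i j ∈ D) ∧ ∀ i j, p i j = ∑ k, star (q k i) * q k j := by
  have : IsClosed (D : Set B) := hD
  obtain ⟨q, hq⟩ := CStarMatrix.exists_eq_sum_star_mul D.subtype Subtype.val_injective
    (fun i j => (⟨p i j, hpD i j⟩ : D)) (fun i j => Subtype.ext (hp i j)) fun d => by
      simpa using hpos (fun i => d i) fun i => (d i).2
  refine ⟨fun i j => q i j, fun i j => (q i j).2, fun i j => ?_⟩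
  simpa using congrArg Subtype.val (hq i j)

section CFree

variable {B A : Type*} [CStarAlgebra B] [Ring A] [Algebra ℂ A] [StarRing A] [StarModule ℂ A]

/-- A list of elements of `A` tagged by the subalgebras they are taken from, in which every entry
is annihilated by `Ψ` and neighbouring tags differ. -/
structure IsCenteredWord (Ψ : A →ₗ[ℂ] B) (S : Bool → StarSubalgebra ℂ A)
    (l : List (Bool × A)) : Prop where
  mem : ∀ x ∈ l, x.2 ∈ S x.1
  map_eq_zero : ∀ x ∈ l, Ψ x.2 = 0
  isChain : l.IsChain fun x y => x.1 ≠ y.1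

/-- A linear map `E : A → B` which is a conditional expectation onto `R`, is positive on each of
the subalgebras `S i`, and is multiplicative on words centered with respect to `Ψ`. -/
structure IsWordExpectation [PartialOrder B] (ι : B →⋆ₐ[ℂ] A) (Ψ : A →ₗ[ℂ] B)
    (S : Bool → StarSubalgebra ℂ A) (R : StarSubalgebra ℂ B) (E : A →ₗ[ℂ] B) : Prop where
  map_mem : ∀ a, E a ∈ R
  map_mul_mul : ∀ b b' : B, b ∈ R → b' ∈ R → ∀ a, E (ι b * a * ι b') = b * E a * b'
  map_coe : ∀ b ∈ R, E (ι b) = b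
  nonneg : ∀ i, ∀ a ∈ S i, 0 ≤ E (star a * a)
  map_prod : ∀ l, IsCenteredWord Ψ S l → E (l.map Prod.snd).prod = (l.map fun x => E x.2).prod

theorem IsCFreeFamily.map_prod {Φ Ψ : A →ₗ[ℂ] B} {S : Bool → StarSubalgebra ℂ A}
    (h : IsCFreeFamily Φ Ψ S) {l : List (Bool × A)} (hl : IsCenteredWord Ψ S l) (hne : l ≠ []) :
    Ψ (l.map Prod.snd).prod = 0 ∧ Φ (l.map Prod.snd).prod = (l.map fun x => Φ x.2).prod := by
  obtain ⟨x, l, rfl⟩ := List.exists_cons_of_ne_nil hne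
  have key := h l.length (fun j => ((x :: l).get j).1)
    (fun i => List.isChain_iff_getElem.1 hl.isChain i (by simp))
    (fun j => ((x :: l).get j).2) (fun j => hl.mem _ (List.get_mem _ _))
    (fun j => hl.map_eq_zero _ (List.get_mem _ _))
  have hget := List.ofFn_get (x :: l)
  have h1 := congrArg (List.map Prod.snd) hget
  have h2 := congrArg (List.map fun x => Φ x.2) hget
  rw [List.map_ofFn] at h1 h2
  rw [← h1, ← h2]
  exact key

namespace IsCenteredWord

variable {Ψ : A →ₗ[ℂ] B} {S : Bool → StarSubalgebra ℂ A} {l l' : List (Bool × A)}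

theorem nil : IsCenteredWord Ψ S [] := ⟨by simp, by simp, by simp⟩

theorem cons {i : Bool} {a : A} (ha : a ∈ S i) (ha0 : Ψ a = 0) (hl : IsCenteredWord Ψ S l)
    (hi : ∀ y ∈ l.head?, y.1 = !i) : IsCenteredWord Ψ S ((i, a) :: l) where
  mem := List.forall_mem_cons.2 ⟨ha, hl.mem⟩
  map_eq_zero := List.forall_mem_cons.2 ⟨ha0, hl.map_eq_zero⟩
  isChain := List.isChain_cons.2 ⟨fun y hy => by simp [hi y hy], hl.isChain⟩

theorem of_cons {x : Bool × A} (h : IsCenteredWord Ψ S (x :: l)) : IsCenteredWord Ψ S l where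
  mem y hy := h.mem y (List.mem_cons_of_mem _ hy)
  map_eq_zero y hy := h.map_eq_zero y (List.mem_cons_of_mem _ hy)
  isChain := h.isChain.tail

theorem head_of_cons {x : Bool × A} (h : IsCenteredWord Ψ S (x :: l)) :
    ∀ y ∈ l.head?, y.1 = !x.1 := fun y hy =>
  Bool.eq_not.2 ((List.isChain_cons.1 h.isChain).1 y hy).symm

theorem append (hl : IsCenteredWord Ψ S l) (hl' : IsCenteredWord Ψ S l')
    (h : ∀ x ∈ l.getLast?, ∀ y ∈ l'.head?, x.1 ≠ y.1) : IsCenteredWord Ψ S (l ++ l') where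
  mem x hx := (List.mem_append.1 hx).elim (hl.mem x) (hl'.mem x)
  map_eq_zero x hx := (List.mem_append.1 hx).elim (hl.map_eq_zero x) (hl'.map_eq_zero x)
  isChain := List.isChain_append.2 ⟨hl.isChain, hl'.isChain, h⟩

end IsCenteredWord

/-- The adjoint of a tagged word. -/
def starWord (l : List (Bool × A)) : List (Bool × A) := (l.map fun x => (x.1, star x.2)).reverse

omit [Algebra ℂ A] [StarModule ℂ A] in
theorem prod_starWord (l : List (Bool × A)) :
    ((starWord l).map Prod.snd).prod = star (l.map Prod.snd).prod := by
  induction l with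
  | nil => simp [starWord]
  | cons x l ih =>
    simp only [starWord, List.map_reverse, List.map_map] at ih
    simp [starWord, ← ih]

omit [StarModule ℂ A] in
theorem prod_map_starWord {E : A →ₗ[ℂ] B} {l : List (Bool × A)}
    (h : ∀ x ∈ l, E (star x.2) = star (E x.2)) :
    ((starWord l).map fun x => E x.2).prod = star (l.map fun x => E x.2).prod := by
  induction l with
  | nil => simp [starWord]
  | cons x l ih =>
    have h1 := h x (by simp)
    have h2 := ih fun y hy => h y (List.mem_cons_of_mem _ hy)
    simp only [starWord, List.map_reverse, List.map_map] at h2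
    simp [starWord, h1, ← h2, Function.comp_def]

theorem IsCenteredWord.adjoint {Ψ : A →ₗ[ℂ] B} {S : Bool → StarSubalgebra ℂ A}
    {l : List (Bool × A)} (hl : IsCenteredWord Ψ S l)
    (hΨ : ∀ i, ∀ a ∈ S i, Ψ (star a) = star (Ψ a)) : IsCenteredWord Ψ S (starWord l) where
  mem := by
    simp only [starWord, List.mem_reverse, List.mem_map]
    rintro _ ⟨x, hx, rfl⟩
    exact star_mem (hl.mem x hx)
  map_eq_zero := by
    simp only [starWord, List.mem_reverse, List.mem_map]
    rintro _ ⟨x, hx, rfl⟩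
    simp [hΨ _ _ (hl.mem x hx), hl.map_eq_zero x hx]
  isChain := by
    rw [starWord, List.isChain_reverse, List.isChain_map]
    exact hl.isChain.imp fun _ _ h => h.symm

omit [Algebra ℂ A] [StarModule ℂ A] in
theorem getLast?_starWord (l : List (Bool × A)) :
    (starWord l).getLast? = l.head?.map fun x => (x.1, star x.2) := by
  simp [starWord]

/-- The span of the elements `a₁ ⋯ aₘ d` with `m ≤ n`, `d ∈ D` and `a₁, …, aₘ` a centered word
starting in `S i`. -/
def wordSpan (ι : B →⋆ₐ[ℂ] A) (Ψ : A →ₗ[ℂ] B) (S : Bool → StarSubalgebra ℂ A)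
    (D : StarSubalgebra ℂ B) (n : ℕ) (i : Bool) : Submodule ℂ A :=
  Submodule.span ℂ {x | ∃ l d, IsCenteredWord Ψ S l ∧ l.length ≤ n ∧ (∀ y ∈ l.head?, y.1 = i) ∧
    d ∈ D ∧ x = (l.map Prod.snd).prod * ι d}

namespace wordSpan

variable {ι : B →⋆ₐ[ℂ] A} {Ψ : A →ₗ[ℂ] B} {S : Bool → StarSubalgebra ℂ A}
  {D : StarSubalgebra ℂ B} {n m : ℕ} {i : Bool}

theorem mem_of_word {l : List (Bool × A)} {d : B} (hl : IsCenteredWord Ψ S l)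
    (hn : l.length ≤ n) (hi : ∀ y ∈ l.head?, y.1 = i) (hd : d ∈ D) :
    (l.map Prod.snd).prod * ι d ∈ wordSpan ι Ψ S D n i :=
  Submodule.subset_span ⟨l, d, hl, hn, hi, hd, rfl⟩

theorem coe_mem {d : B} (hd : d ∈ D) : ι d ∈ wordSpan ι Ψ S D n i := by
  simpa using mem_of_word (ι := ι) (n := n) (i := i) (IsCenteredWord.nil (Ψ := Ψ) (S := S))
    (by simp) (by simp) hd

theorem one_mem : (1 : A) ∈ wordSpan ι Ψ S D n i := by
  simpa using coe_mem (ι := ι) (Ψ := Ψ) (S := S) (n := n) (i := i) (OneMemClass.one_mem D)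

theorem mono (h : n ≤ m) : wordSpan ι Ψ S D n i ≤ wordSpan ι Ψ S D m i := by
  refine Submodule.span_mono ?_
  rintro _ ⟨l, d, hl, hn, hi, hd, rfl⟩
  exact ⟨l, d, hl, hn.trans h, hi, hd, rfl⟩

theorem exists_eq_add_sum {u : A} (hu : u ∈ wordSpan ι Ψ S D (n + 1) i) :
    ∃ d ∈ D, ∃ (m : ℕ) (c w : Fin m → A), (∀ j, c j ∈ S i) ∧ (∀ j, Ψ (c j) = 0) ∧
      (∀ j, w j ∈ wordSpan ι Ψ S D n (!i)) ∧ u = ι d + ∑ j, c j * w j := by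
  let s : Set A := {x | ∃ c w, c ∈ S i ∧ Ψ c = 0 ∧ w ∈ wordSpan ι Ψ S D n (!i) ∧ x = c * w}
  have hle : wordSpan ι Ψ S D (n + 1) i ≤
      (Subalgebra.toSubmodule D.toSubalgebra).map ι.toAlgHom.toLinearMap ⊔ Submodule.span ℂ s := by
    refine Submodule.span_le.2 ?_
    rintro _ ⟨l, d, hl, hn, hi, hd, rfl⟩
    cases l with
    | nil =>
      refine Submodule.mem_sup_left ?_
      simpa using ⟨d, hd, rfl⟩
    | cons x l =>
      obtain ⟨j, a⟩ := x
      obtain rfl : j = i := hi (j, a) (by simp)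
      refine Submodule.mem_sup_right (Submodule.subset_span ⟨a, (l.map Prod.snd).prod * ι d,
        hl.mem (j, a) (by simp), hl.map_eq_zero (j, a) (by simp),
        mem_of_word hl.of_cons (by simpa using hn) hl.head_of_cons hd, ?_⟩)
      simp [mul_assoc]
  obtain ⟨_, ⟨d, hd, rfl⟩, y, hy, rfl⟩ := Submodule.mem_sup.1 (hle hu)
  obtain ⟨m, f, g, rfl⟩ := (Submodule.mem_span_set' (R := ℂ)).1 hy
  choose c w hc hc0 hw hg using fun j => (g j).2
  refine ⟨d, hd, m, fun j => f j • c j, w, fun j => (S i).smul_mem (hc j) _,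
    fun j => by simp [hc0 j], hw, ?_⟩
  simp only [hg, smul_mul_assoc]
  rfl

end wordSpan

theorem LinearMap.map_star_of_nonneg [PartialOrder B] [StarOrderedRing B] (E : A →ₗ[ℂ] B)
    (S : StarSubalgebra ℂ A) (h : ∀ a ∈ S, 0 ≤ E (star a * a)) {a : A} (ha : a ∈ S) :
    E (star a) = star (E a) := by
  have h0 : ∀ a ∈ S, star (E (star a * a)) = E (star a * a) :=
    fun a ha => (h a ha).isSelfAdjoint.star_eq
  have hone := h0 1 (one_mem S)
  have haa := h0 a ha
  have h1 := h0 (1 + a) (add_mem (one_mem S) ha)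
  have h2 := h0 (1 + Complex.I • a) (add_mem (one_mem S) (S.smul_mem ha _))
  simp only [star_add, star_one, mul_add, add_mul, one_mul, mul_one, map_add, star_smul,
    smul_mul_assoc, mul_smul_comm, map_smul, Complex.star_def, Complex.conj_I,
    neg_smul, neg_mul, neg_neg, star_neg,
    map_neg] at h1 h2 hone
  rw [hone, haa] at h1 h2
  have h3 : star (E a) + star (E (star a)) = E a + E (star a) := by
    linear_combination (norm := module) h1
  have h4 : Complex.I • (star (E (star a)) - star (E a) - (E a - E (star a))) = 0 := by
    simp only [smul_sub]
    linear_combination (norm := module) h2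
  have h5 := (smul_eq_zero_iff_right Complex.I_ne_zero).1 h4
  have h6 : (2 : ℂ) • (E (star a) - star (E a)) = 0 := by
    rw [two_smul]
    linear_combination (norm := module) h5 - h3
  exact sub_eq_zero.1 ((smul_eq_zero_iff_right two_ne_zero).1 h6)

theorem LinearMap.map_star_mul_mul_of_span {E : A →ₗ[ℂ] B} {s t : Set A} {k : A} {e : B}
    (h : ∀ x ∈ s, ∀ y ∈ t, E (star x * (k * y)) = star (E x) * (e * E y)) {u v : A}
    (hu : u ∈ Submodule.span ℂ s) (hv : v ∈ Submodule.span ℂ t) :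
    E (star u * (k * v)) = star (E u) * (e * E v) := by
  induction hu using Submodule.span_induction with
  | zero => simp
  | add x y _ _ hx hy => simp [add_mul, hx, hy]
  | smul a x _ hx => simp [hx]
  | mem x hx =>
    induction hv using Submodule.span_induction with
    | zero => simp
    | add x y _ _ hx hy => simp [mul_add, hx, hy]
    | smul a x _ hx => simp [hx]
    | mem y hy => exact h x hx y hy

namespace IsWordExpectation

variable [PartialOrder B] [StarOrderedRing B] {ι : B →⋆ₐ[ℂ] A} {Ψ E : A →ₗ[ℂ] B}
  {S : Bool → StarSubalgebra ℂ A} {D R : StarSubalgebra ℂ B} {n m : ℕ} {i : Bool}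

protected theorem map_star (h : IsWordExpectation ι Ψ S R E) {a : A} (ha : a ∈ S i) :
    E (star a) = star (E a) :=
  E.map_star_of_nonneg (S i) (h.nonneg i) ha

omit [StarOrderedRing B] in
theorem map_coe_mul (h : IsWordExpectation ι Ψ S R E) {b : B} (hb : b ∈ R) (a : A) :
    E (ι b * a) = b * E a := by
  simpa using h.map_mul_mul b 1 hb (one_mem R) a

omit [StarOrderedRing B] in
theorem map_mul_coe (h : IsWordExpectation ι Ψ S R E) {b : B} (hb : b ∈ R) (a : A) :
    E (a * ι b) = E a * b := by
  simpa using h.map_mul_mul 1 b (one_mem R) hb a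

omit [StarOrderedRing B] in
protected theorem map_one (h : IsWordExpectation ι Ψ S R E) : E 1 = 1 := by
  simpa using h.map_coe 1 (one_mem R)

theorem map_star_mul (h : IsWordExpectation ι Ψ S R E) (hΨ : IsWordExpectation ι Ψ S D Ψ)
    (hDR : D ≤ R) {u v : A} (hu : u ∈ wordSpan ι Ψ S D n i)
    (hv : v ∈ wordSpan ι Ψ S D m (!i)) : E (star u * v) = star (E u) * E v := by
  have key := LinearMap.map_star_mul_mul_of_span (E := E) (k := 1) (e := 1) ?_ hu hv
  · simpa using key
  rintro _ ⟨l, d, hl, -, hi, hd, rfl⟩ _ ⟨l', d', hl', -, hi', hd', rfl⟩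
  have hw : IsCenteredWord Ψ S (starWord l ++ l') := by
    refine (hl.adjoint fun i a => hΨ.map_star).append hl' ?_
    simp only [getLast?_starWord, Option.mem_map]
    rintro _ ⟨x, hx, rfl⟩ y hy
    simp [hi x hx, hi' y hy]
  have h1 := h.map_prod _ hw
  have h2 := h.map_prod _ hl
  have h3 := h.map_prod _ hl'
  simp only [List.map_append, List.prod_append, prod_starWord] at h1
  rw [prod_map_starWord fun x hx => h.map_star (hl.mem x hx), ← h2, ← h3] at h1
  have h4 := h.map_mul_mul (star d) d' (star_mem (hDR hd)) (hDR hd')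
    (star (l.map Prod.snd).prod * (l'.map Prod.snd).prod)
  rw [h1] at h4
  rw [h.map_mul_coe (hDR hd), h.map_mul_coe (hDR hd')]
  simpa [mul_assoc, map_star] using h4

theorem map_star_mul_mul (h : IsWordExpectation ι Ψ S R E) (hΨ : IsWordExpectation ι Ψ S D Ψ)
    (hDR : D ≤ R) {u v c : A} (hu : u ∈ wordSpan ι Ψ S D n (!i)) (hc : c ∈ S i) (hc0 : Ψ c = 0)
    (hv : v ∈ wordSpan ι Ψ S D m (!i)) :
    E (star u * (c * v)) = star (E u) * (E c * E v) := by
  refine LinearMap.map_star_mul_mul_of_span ?_ hu hv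
  rintro _ ⟨l, d, hl, -, hi, hd, rfl⟩ _ ⟨l', d', hl', -, hi', hd', rfl⟩
  have hw : IsCenteredWord Ψ S (starWord l ++ (i, c) :: l') := by
    refine (hl.adjoint fun i a => hΨ.map_star).append (hl'.cons hc hc0 hi') ?_
    simp only [getLast?_starWord, Option.mem_map]
    rintro _ ⟨x, hx, rfl⟩ y hy
    obtain rfl : (i, c) = y := by simpa using hy
    simp [hi x hx]
  have h1 := h.map_prod _ hw
  have h2 := h.map_prod _ hl
  have h3 := h.map_prod _ hl'
  simp only [List.map_append, List.prod_append, prod_starWord, List.map_cons,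
    List.prod_cons] at h1
  rw [prod_map_starWord fun x hx => h.map_star (hl.mem x hx), ← h2, ← h3] at h1
  have h4 := h.map_mul_mul (star d) d' (star_mem (hDR hd)) (hDR hd')
    (star (l.map Prod.snd).prod * (c * (l'.map Prod.snd).prod))
  rw [h1] at h4
  rw [h.map_mul_coe (hDR hd), h.map_mul_coe (hDR hd')]
  simpa [mul_assoc, map_star] using h4

protected theorem map_mul (h : IsWordExpectation ι Ψ S R E) (hΨ : IsWordExpectation ι Ψ S D Ψ)
    (hDR : D ≤ R) {v c : A} (hc : c ∈ S i) (hc0 : Ψ c = 0)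
    (hv : v ∈ wordSpan ι Ψ S D m (!i)) : E (c * v) = E c * E v := by
  simpa [h.map_one] using
    h.map_star_mul_mul hΨ hDR (wordSpan.one_mem (n := 0)) hc hc0 hv

theorem map_star_of_mem (h : IsWordExpectation ι Ψ S R E) (hΨ : IsWordExpectation ι Ψ S D Ψ)
    (hDR : D ≤ R) {u : A} (hu : u ∈ wordSpan ι Ψ S D n i) : E (star u) = star (E u) := by
  simpa [h.map_one] using h.map_star_mul hΨ hDR hu (wordSpan.one_mem (n := 0))

end IsWordExpectation

namespace wordSpan

variable [PartialOrder B] [StarOrderedRing B] {ι : B →⋆ₐ[ℂ] A} {Ψ : A →ₗ[ℂ] B}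
  {S : Bool → StarSubalgebra ℂ A} {D : StarSubalgebra ℂ B} {n : ℕ} {i j : Bool}

omit [StarOrderedRing B] in
theorem coe_mul_mem (hS : ∀ i b, ι b ∈ S i) (hΨ : IsWordExpectation ι Ψ S D Ψ) {d : B}
    (hd : d ∈ D) {u : A} (hu : u ∈ wordSpan ι Ψ S D n i) : ι d * u ∈ wordSpan ι Ψ S D n i := by
  induction hu using Submodule.span_induction with
  | zero => simp
  | add x y _ _ hx hy => rw [mul_add]; exact add_mem hx hy
  | smul a x _ hx => rw [mul_smul_comm]; exact Submodule.smul_mem _ _ hx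
  | mem x hx =>
    obtain ⟨l, e, hl, hn, hi, he, rfl⟩ := hx
    cases l with
    | nil => simpa using coe_mem (ι := ι) (mul_mem hd he)
    | cons x l =>
      have hw : IsCenteredWord Ψ S ((x.1, ι d * x.2) :: l) :=
        hl.of_cons.cons (mul_mem (hS _ _) (hl.mem x (by simp)))
          (by rw [hΨ.map_coe_mul hd, hl.map_eq_zero x (by simp), mul_zero]) hl.head_of_cons
      simpa [mul_assoc] using mem_of_word (ι := ι) hw (n := n) (by simpa using hn)
        (by simpa using hi) he

theorem centered_mul_mem (hS : ∀ i b, ι b ∈ S i) (hΨ : IsWordExpectation ι Ψ S D Ψ) {c : A}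
    (hc : c ∈ S i) (hc0 : Ψ c = 0) {u : A} (hu : u ∈ wordSpan ι Ψ S D n j) :
    c * u ∈ wordSpan ι Ψ S D (n + 1) true ⊔ wordSpan ι Ψ S D (n + 1) false := by
  have hle : ∀ k, wordSpan ι Ψ S D (n + 1) k ≤
      wordSpan ι Ψ S D (n + 1) true ⊔ wordSpan ι Ψ S D (n + 1) false := by
    rintro (_ | _)
    exacts [le_sup_right, le_sup_left]
  induction hu using Submodule.span_induction with
  | zero => simp
  | add x y _ _ hx hy => rw [mul_add]; exact add_mem hx hy
  | smul a x _ hx => rw [mul_smul_comm]; exact Submodule.smul_mem _ _ hx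
  | mem x hx =>
    obtain ⟨l, e, hl, hn, hj, he, rfl⟩ := hx
    by_cases hi : ∀ y ∈ l.head?, y.1 = !i
    · refine hle i ?_
      simpa [mul_assoc] using mem_of_word (ι := ι) (hl.cons hc hc0 hi) (n := n + 1)
        (by simpa using hn) (by simp) he
    · cases l with
      | nil => simp at hi
      | cons x l =>
        obtain ⟨k, a⟩ := x
        obtain rfl : k = i := by simpa using hi
        have ha : a ∈ S k := hl.mem (k, a) (by simp)
        have h1 : c * a - ι (Ψ (c * a)) ∈ S k := sub_mem (mul_mem hc ha) (hS _ _)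
        have h2 : Ψ (c * a - ι (Ψ (c * a))) = 0 := by
          rw [map_sub, hΨ.map_coe _ (hΨ.map_mem _), sub_self]
        have h3 := mem_of_word (ι := ι) (n := n + 1) (i := k) (hl.of_cons.cons h1 h2 hl.head_of_cons)
          (by simp at hn ⊢; omega) (by simp) he
        have h4 := coe_mul_mem hS hΨ (hΨ.map_mem (c * a)) <|
          mem_of_word (ι := ι) (n := n + 1) hl.of_cons (by simp at hn; omega) hl.head_of_cons he
        refine (congrArg (· ∈ _) ?_).mpr (add_mem (hle _ h3) (hle _ h4))
        simp [sub_mul, mul_assoc]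

theorem mul_mem_sup (hS : ∀ i b, ι b ∈ S i) (hΨ : IsWordExpectation ι Ψ S D Ψ) {a : A}
    (ha : a ∈ S i) {u : A} (hu : u ∈ wordSpan ι Ψ S D n true ⊔ wordSpan ι Ψ S D n false) :
    a * u ∈ wordSpan ι Ψ S D (n + 1) true ⊔ wordSpan ι Ψ S D (n + 1) false := by
  have hc : a - ι (Ψ a) ∈ S i := sub_mem ha (hS _ _)
  have hc0 : Ψ (a - ι (Ψ a)) = 0 := by rw [map_sub, hΨ.map_coe _ (hΨ.map_mem _), sub_self]
  have hΨa := hΨ.map_mem a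
  obtain ⟨v, hv, w, hw, rfl⟩ := Submodule.mem_sup.1 hu
  have hsplit : a * (v + w) = ((a - ι (Ψ a)) * v + (a - ι (Ψ a)) * w) +
      (ι (Ψ a) * v + ι (Ψ a) * w) := by noncomm_ring
  rw [hsplit]
  refine add_mem (add_mem (centered_mul_mem hS hΨ hc hc0 hv) (centered_mul_mem hS hΨ hc hc0 hw))
    (Submodule.add_mem_sup ?_ ?_)
  exacts [mono n.le_succ (coe_mul_mem hS hΨ hΨa hv), mono n.le_succ (coe_mul_mem hS hΨ hΨa hw)]

end wordSpan

namespace IsWordExpectation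

variable [PartialOrder B] [StarOrderedRing B] {ι : B →⋆ₐ[ℂ] A} {Ψ E : A →ₗ[ℂ] B}
  {S : Bool → StarSubalgebra ℂ A} {D R : StarSubalgebra ℂ B} {n : ℕ} {i : Bool}

theorem star_map_mul_map_le_add_coe (h : IsWordExpectation ι Ψ S R E) {d : B} (hd : d ∈ R) {s : A}
    (hs : E (star s) = star (E s)) (hle : star (E s) * E s ≤ E (star s * s)) :
    star (E (ι d + s)) * E (ι d + s) ≤ E (star (ι d + s) * (ι d + s)) := by
  have hd' := star_mem hd
  have h1 : star (ι d) = ι (star d) := (map_star ι d).symm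
  simp only [star_add, map_add, mul_add, add_mul, h1, h.map_coe d hd, h.map_coe_mul hd',
    h.map_mul_coe hd, hs]
  gcongr

theorem star_map_mul_map_le_of_mem (h : IsWordExpectation ι Ψ S R E) (hS : ∀ i b, ι b ∈ S i)
    {a : A} (ha : a ∈ S i) : star (E a) * E a ≤ E (star a * a) := by
  have hE := h.map_mem a
  have h0 := h.nonneg i (a - ι (E a)) (sub_mem ha (hS _ _))
  have h1 : star (ι (E a)) = ι (star (E a)) := (map_star ι _).symm
  have h2 : E (star (a - ι (E a)) * (a - ι (E a))) = E (star a * a) - star (E a) * E a := by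
    simp only [star_sub, sub_mul, mul_sub, h1, map_sub, h.map_coe_mul (star_mem hE),
      h.map_mul_coe hE, h.map_star ha, h.map_coe _ hE]
    abel
  rw [h2] at h0
  exact sub_nonneg.1 h0

theorem exists_map_star_mul_eq_sum (hΨ : IsWordExpectation ι Ψ S D Ψ) (hS : ∀ i b, ι b ∈ S i)
    (hD : IsClosed (D : Set B)) {m : Type*} [Fintype m] {c : m → A} (hc : ∀ j, c j ∈ S i) :
    ∃ q : m → m → B, (∀ j k, q j k ∈ D) ∧
      ∀ j k, Ψ (star (c j) * c k) = ∑ l, star (q l j) * q l k := by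
  refine D.exists_eq_sum_star_mul hD _ (fun j k => hΨ.map_mem _) (fun j k => ?_) fun d hd => ?_
  · rw [← hΨ.map_star (mul_mem (star_mem (hc j)) (hc k)), star_mul, star_star]
  · have h0 := hΨ.nonneg i (∑ j, c j * ι (d j)) (sum_mem fun j _ => mul_mem (hc j) (hS _ _))
    refine h0.trans_eq ?_
    simp only [star_sum, Finset.sum_mul_sum, map_sum, star_mul]
    refine Finset.sum_congr rfl fun j _ => Finset.sum_congr rfl fun k _ => ?_
    rw [← hΨ.map_mul_mul _ _ (star_mem (hd j)) (hd k), map_star, mul_assoc, mul_assoc, mul_assoc]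

theorem star_map_mul_map_le_sum (h : IsWordExpectation ι Ψ S R E)
    (hΨ : IsWordExpectation ι Ψ S D Ψ) (hDR : D ≤ R) (hS : ∀ i b, ι b ∈ S i)
    (hD : IsClosed (D : Set B)) {m : Type*} [Fintype m] {c w : m → A} (hc : ∀ j, c j ∈ S i)
    (hc0 : ∀ j, Ψ (c j) = 0) (hw : ∀ j, w j ∈ wordSpan ι Ψ S D n (!i))
    (ih : ∀ v ∈ wordSpan ι Ψ S D n (!i), star (E v) * E v ≤ E (star v * v)) :
    star (E (∑ j, c j * w j)) * E (∑ j, c j * w j) ≤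
      E (star (∑ j, c j * w j) * ∑ j, c j * w j) := by
  obtain ⟨q, hqD, hq⟩ := hΨ.exists_map_star_mul_eq_sum hS hD hc
  let v : m → A := fun k => ∑ j, ι (q k j) * w j
  let a : A := ∑ j, c j * ι (E (w j))
  have hEs : E (∑ j, c j * w j) = E a := by
    simp only [a, map_sum]
    exact Finset.sum_congr rfl fun j _ => by
      rw [h.map_mul hΨ hDR (hc j) (hc0 j) (hw j), h.map_mul_coe (h.map_mem _)]
  have ha : star (E a) * E a ≤ E (star a * a) :=
    h.star_map_mul_map_le_of_mem hS (sum_mem fun j _ => mul_mem (hc j) (hS _ _))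
  have hv : ∑ k, star (E (v k)) * E (v k) ≤ ∑ k, E (star (v k) * v k) :=
    Finset.sum_le_sum fun k _ => ih _ <|
      sum_mem fun j _ => wordSpan.coe_mul_mem hS hΨ (hqD k j) (hw j)
  have hterm : ∀ j k, E (star (c j * w j) * (c k * w k)) =
      E (star (c j * ι (E (w j))) * (c k * ι (E (w k)))) -
        star (E (w j)) * Ψ (star (c j) * c k) * E (w k) +
        E (star (w j) * ι (Ψ (star (c j) * c k)) * w k) := by
    intro j k
    have hPD := hΨ.map_mem (star (c j) * c k)
    have hcc := mul_mem (star_mem (hc j)) (hc k)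
    have h1 := h.map_star_mul_mul hΨ hDR (hw j)
      (c := star (c j) * c k - ι (Ψ (star (c j) * c k))) (sub_mem hcc (hS _ _))
      (by rw [map_sub, hΨ.map_coe _ hPD, sub_self]) (hw k)
    have h2 := h.map_mul_mul (star (E (w j))) (E (w k)) (star_mem (h.map_mem _)) (h.map_mem _)
      (star (c j) * c k)
    simp only [sub_mul, mul_sub, map_sub, h.map_coe _ (hDR hPD), map_star ι] at h1 h2
    simp only [star_mul, mul_assoc] at h1 h2 ⊢
    rw [h2, ← h1]
    abel
  have hvE : ∑ j, ∑ k, star (E (w j)) * Ψ (star (c j) * c k) * E (w k) =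
      ∑ k, star (E (v k)) * E (v k) := by
    have hEv : ∀ k, E (v k) = ∑ j, q k j * E (w j) := fun k => by
      simp only [v, map_sum, h.map_coe_mul (hDR (hqD _ _))]
    simp only [hEv, hq, star_sum, Finset.mul_sum, Finset.sum_mul, star_mul,
      mul_assoc]
    exact ((Finset.sum_congr rfl fun _ _ => Finset.sum_comm).trans Finset.sum_comm).trans
      (Finset.sum_congr rfl fun _ _ => Finset.sum_comm)
  have hvv : ∑ j, ∑ k, E (star (w j) * ι (Ψ (star (c j) * c k)) * w k) =
      ∑ k, E (star (v k) * v k) := by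
    simp only [v, hq, star_sum, Finset.mul_sum, Finset.sum_mul, star_mul,
      mul_assoc, map_sum, map_mul, map_star]
    exact ((Finset.sum_congr rfl fun _ _ => Finset.sum_comm).trans Finset.sum_comm).trans
      (Finset.sum_congr rfl fun _ _ => Finset.sum_comm)
  have hsum : E (star (∑ j, c j * w j) * ∑ j, c j * w j) =
      E (star a * a) - ∑ k, star (E (v k)) * E (v k) + ∑ k, E (star (v k) * v k) := by
    rw [← hvE, ← hvv]
    simp only [a, star_sum, Finset.sum_mul_sum, map_sum, hterm, Finset.sum_add_distrib,
      Finset.sum_sub_distrib]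
  rw [hsum, hEs, sub_add_eq_add_sub, add_sub_assoc]
  exact ha.trans (le_add_of_nonneg_right (sub_nonneg.2 hv))

theorem star_map_mul_map_le (h : IsWordExpectation ι Ψ S R E)
    (hΨ : IsWordExpectation ι Ψ S D Ψ) (hDR : D ≤ R) (hS : ∀ i b, ι b ∈ S i)
    (hD : IsClosed (D : Set B)) {u : A} (hu : u ∈ wordSpan ι Ψ S D n i) :
    star (E u) * E u ≤ E (star u * u) := by
  induction n generalizing i u with
  | zero =>
    refine (h.map_star_mul hΨ hDR hu (?_ : u ∈ wordSpan ι Ψ S D 0 (!i))).ge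
    refine Submodule.span_mono ?_ hu
    rintro _ ⟨l, d, hl, hn, -, hd, rfl⟩
    obtain rfl := List.length_eq_zero_iff.1 (Nat.le_zero.1 hn)
    exact ⟨[], d, hl, le_rfl, by simp, hd, rfl⟩
  | succ n ih =>
    obtain ⟨d, hd, m, c, w, hc, hc0, hw, rfl⟩ := wordSpan.exists_eq_add_sum hu
    refine h.star_map_mul_map_le_add_coe (hDR hd) ?_
      (h.star_map_mul_map_le_sum hΨ hDR hS hD hc hc0 hw fun v hv => ih hv)
    refine h.map_star_of_mem hΨ hDR (n := n + 1) (i := i) ?_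
    have := sub_mem hu (wordSpan.coe_mem hd)
    rwa [add_sub_cancel_left] at this

theorem nonneg_of_mem_sup (h : IsWordExpectation ι Ψ S R E)
    (hΨ : IsWordExpectation ι Ψ S D Ψ) (hDR : D ≤ R) (hS : ∀ i b, ι b ∈ S i)
    (hD : IsClosed (D : Set B)) {a : A}
    (ha : a ∈ wordSpan ι Ψ S D n true ⊔ wordSpan ι Ψ S D n false) : 0 ≤ E (star a * a) := by
  obtain ⟨u, hu, v, hv, rfl⟩ := Submodule.mem_sup.1 ha
  have hle : star (E (u + v)) * E (u + v) ≤ E (star (u + v) * (u + v)) := by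
    simp only [star_add, map_add, add_mul, mul_add, h.map_star_mul hΨ hDR hu hv,
      h.map_star_mul hΨ hDR hv hu]
    gcongr
    exacts [h.star_map_mul_map_le hΨ hDR hS hD hu, h.star_map_mul_map_le hΨ hDR hS hD hv]
  exact (star_mul_self_nonneg _).trans hle

end IsWordExpectation

theorem exists_mem_wordSpan_of_mem_adjoin [PartialOrder B] [StarOrderedRing B] {ι : B →⋆ₐ[ℂ] A}
    {Ψ : A →ₗ[ℂ] B} {S : Bool → StarSubalgebra ℂ A} {D : StarSubalgebra ℂ B}
    (hΨ : IsWordExpectation ι Ψ S D Ψ) (hS : ∀ i b, ι b ∈ S i) {a : A}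
    (ha : a ∈ Algebra.adjoin ℂ (S true ∪ S false : Set A)) :
    ∃ n, a ∈ wordSpan ι Ψ S D n true ⊔ wordSpan ι Ψ S D n false := by
  have hmono : ∀ {n m : ℕ}, n ≤ m → wordSpan ι Ψ S D n true ⊔ wordSpan ι Ψ S D n false ≤
      wordSpan ι Ψ S D m true ⊔ wordSpan ι Ψ S D m false :=
    fun h => sup_le_sup (wordSpan.mono h) (wordSpan.mono h)
  suffices H : ∀ n, ∀ u ∈ wordSpan ι Ψ S D n true ⊔ wordSpan ι Ψ S D n false,
      ∃ m, a * u ∈ wordSpan ι Ψ S D m true ⊔ wordSpan ι Ψ S D m false by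
    simpa using H 0 1 (Submodule.mem_sup_left wordSpan.one_mem)
  induction ha using Algebra.adjoin_induction with
  | mem x hx =>
    intro n u hu
    rcases hx with hx | hx <;> exact ⟨n + 1, wordSpan.mul_mem_sup hS hΨ hx hu⟩
  | algebraMap r =>
    intro n u hu
    rw [← Algebra.smul_def]
    exact ⟨n, Submodule.smul_mem _ r hu⟩
  | add x y _ _ hx hy =>
    intro n u hu
    obtain ⟨k, hk⟩ := hx n u hu
    obtain ⟨l, hl⟩ := hy n u hu
    rw [add_mul]
    exact ⟨max k l, add_mem (hmono (le_max_left k l) hk) (hmono (le_max_right k l) hl)⟩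
  | mul x y _ _ hx hy =>
    intro n u hu
    obtain ⟨k, hk⟩ := hy n u hu
    rw [mul_assoc]
    exact hx k _ hk

end CFree

theorem stmt_3 {B A : Type*}
    [CStarAlgebra B] [PartialOrder B] [StarOrderedRing B]
    [Ring A] [Algebra ℂ A] [StarRing A] [StarModule ℂ A]
    -- `𝔅` sits inside `𝔄` as a unital *-subalgebra:
    (ι : B →⋆ₐ[ℂ] A) (hι : Function.Injective ι)
    -- `𝔇` is a C*-subalgebra of `𝔅`:
    (D : StarSubalgebra ℂ B) (hD : IsClosed (D : Set B))
    -- `Φ : 𝔄 → 𝔅` is a conditional expectation: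
    (Φ : A →ₗ[ℂ] B)
    (hΦbimod : ∀ (b b' : B) (a : A), Φ (ι b * a * ι b') = b * Φ a * b')
    (hΦid : ∀ b : B, Φ (ι b) = b)
    -- `Ψ : 𝔄 → 𝔇` is a conditional expectation:
    (Ψ : A →ₗ[ℂ] B) (hΨD : ∀ a : A, Ψ a ∈ D)
    (hΨbimod : ∀ d d' : B, d ∈ D → d' ∈ D → ∀ a : A, Ψ (ι d * a * ι d') = d * Ψ a * d')
    (hΨid : ∀ d : B, d ∈ D → Ψ (ι d) = d)
    -- `X`, `Y` are selfadjoint: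
    (X Y : A) (hX : star X = X) (hY : star Y = Y)
    -- `X`, `Y` are c-free with respect to `(Φ, Ψ)`:
    (hfree : IsCFreeFamily Φ Ψ (fun t : Bool =>
        if t then StarAlgebra.adjoin ℂ (Set.range ι ∪ {X})
        else StarAlgebra.adjoin ℂ (Set.range ι ∪ {Y})))
    -- `Φ` and `Ψ` are positive on the *-subalgebras generated by `𝔅 ∪ {X}`, `𝔅 ∪ {Y}`:
    (hXpos : ∀ a ∈ StarAlgebra.adjoin ℂ (Set.range ι ∪ {X}),
        0 ≤ Φ (star a * a) ∧ 0 ≤ Ψ (star a * a))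
    (hYpos : ∀ a ∈ StarAlgebra.adjoin ℂ (Set.range ι ∪ {Y}),
        0 ≤ Φ (star a * a) ∧ 0 ≤ Ψ (star a * a)) :
    ∀ a ∈ StarAlgebra.adjoin ℂ (Set.range ι ∪ {X + Y}),
      0 ≤ Φ (star a * a) ∧ 0 ≤ Ψ (star a * a) := by
  intro a ha
  let S : Bool → StarSubalgebra ℂ A := fun t => if t then StarAlgebra.adjoin ℂ (Set.range ι ∪ {X})
    else StarAlgebra.adjoin ℂ (Set.range ι ∪ {Y})
  have hS : ∀ i b, ι b ∈ S i := by
    rintro (_ | _) b <;> exact StarAlgebra.subset_adjoin ℂ _ (Or.inl ⟨b, rfl⟩)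
  have hΨ : IsWordExpectation ι Ψ S D Ψ :=
    { map_mem := hΨD
      map_mul_mul := hΨbimod
      map_coe := hΨid
      nonneg := by
        rintro (_ | _) a ha
        exacts [(hYpos a ha).2, (hXpos a ha).2]
      map_prod := by
        rintro (_ | ⟨x, l⟩) hl
        · simpa using hΨid 1 (one_mem D)
        · rw [(hfree.map_prod hl (List.cons_ne_nil _ _)).1, List.map_cons, List.prod_cons,
            hl.map_eq_zero x List.mem_cons_self, zero_mul] }
  have hΦ : IsWordExpectation ι Ψ S ⊤ Φ :=
    { map_mem := fun _ => StarSubalgebra.mem_top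
      map_mul_mul := fun b b' _ _ => hΦbimod b b'
      map_coe := fun b _ => hΦid b
      nonneg := by
        rintro (_ | _) a ha
        exacts [(hYpos a ha).1, (hXpos a ha).1]
      map_prod := by
        rintro (_ | ⟨x, l⟩) hl
        · simpa using hΦid 1
        · exact (hfree.map_prod hl (List.cons_ne_nil _ _)).2 }
  have hXY : X + Y ∈ Algebra.adjoin ℂ (S true ∪ S false : Set A) :=
    add_mem (Algebra.subset_adjoin (Or.inl (StarAlgebra.subset_adjoin ℂ _ (Or.inr rfl))))
      (Algebra.subset_adjoin (Or.inr (StarAlgebra.subset_adjoin ℂ _ (Or.inr rfl))))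
  have hle : (StarAlgebra.adjoin ℂ (Set.range ι ∪ {X + Y})).toSubalgebra ≤
      Algebra.adjoin ℂ (S true ∪ S false : Set A) := by
    rw [StarAlgebra.adjoin_toSubalgebra]
    refine Algebra.adjoin_le ?_
    rintro x ((⟨b, rfl⟩ | rfl) | (⟨b, hb⟩ | hx))
    · exact Algebra.subset_adjoin (Or.inl (hS true b))
    · exact hXY
    · obtain rfl : ι (star b) = x := by rw [map_star, hb, star_star]
      exact Algebra.subset_adjoin (Or.inl (hS true _))
    · obtain rfl : X + Y = x := by
        rw [← star_star x, Set.mem_singleton_iff.1 hx, star_add, hX, hY]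
      exact hXY
  obtain ⟨n, hn⟩ := exists_mem_wordSpan_of_mem_adjoin hΨ hS (hle ha)
  exact ⟨hΦ.nonneg_of_mem_sup hΨ le_top hS hD hn, hΨ.nonneg_of_mem_sup hΨ le_rfl hS hD hn⟩
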